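/- Let π be a direct path from ∅ to [n] that shares exactly s edges with the canonical path π_n and has gap vector a = (a_0, a_1, …, a_s). Then the probability that both π and π_n are accessible equals (∏_{i=0}^{s} C(2a_i, a_i)) / (2n − s)!. -/

import Mathlib

open MeasureTheory Filter
open scoped ENNReal

namespace RandomHypercube

/-- Index of a (potential) hypercube edge: the lower endpoint `A` together with the
direction `i` that is added, representing the edge from `A` to `A ∪ {i}`. -/
abbrev EdgeIdx (n : ℕ) := Finset (Fin n) × Fin n

/-- The sample space: an i.i.d. Uniform[0,1] weight for each edge index. -/
abbrev CubeOmega (n : ℕ) := EdgeIdx n → ℝ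

/-- The product of uniform measures on [0,1], one for each edge. -/
noncomputable def cubeMeasure (n : ℕ) : Measure (CubeOmega n) :=
  Measure.pi fun _ => (volume : Measure ℝ).restrict (Set.Icc 0 1)

/-- The vertex visited by the direct path associated to the permutation `σ`
just before taking its `j`-th step: the image under `σ` of `{0, …, j-1}`. -/
def initSeg (n : ℕ) (σ : Equiv.Perm (Fin n)) (j : Fin n) : Finset (Fin n) :=
  (Finset.univ.filter fun i => i < j).image σ

/-- The edge used in the `j`-th step of the direct path associated to `σ`. -/
def pathEdge (n : ℕ) (σ : Equiv.Perm (Fin n)) (j : Fin n) : EdgeIdx n :=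
  (initSeg n σ j, σ j)

/-- The direct path associated to `σ` is accessible if its successive edge
weights are strictly increasing. -/
def Accessible (n : ℕ) (σ : Equiv.Perm (Fin n)) (ω : CubeOmega n) : Prop :=
  StrictMono fun j : Fin n => ω (pathEdge n σ j)

/-- The number of accessible direct paths from `∅` to `[n]`. -/
noncomputable def X (n : ℕ) (ω : CubeOmega n) : ℕ :=
  Nat.card {σ : Equiv.Perm (Fin n) // Accessible n σ ω}


/-- The set of steps `j` at which the direct paths of `σ` and `σ'` use the same edge
(shared edges necessarily occur at the same level in both paths). -/
def sharedSteps (n : ℕ) (σ σ' : Equiv.Perm (Fin n)) : Finset (Fin n) :=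
  Finset.univ.filter fun j => pathEdge n σ j = pathEdge n σ' j

/-- Given the sorted list `l` of steps (levels) of the shared edges, the gap vector:
the number of edges before the first shared edge, strictly between consecutive shared
edges, and after the last shared edge. -/
def gapsOfList (n : ℕ) (l : List ℕ) : List ℕ :=
  List.zipWith (fun a b => b - a) (0 :: l.map (· + 1)) (l ++ [n])

/-- The gap vector of the direct path of `σ'` relative to that of `σ`. -/
def gapVector (n : ℕ) (σ σ' : Equiv.Perm (Fin n)) : List ℕ :=
  gapsOfList n (((sharedSteps n σ σ').sort (· ≤ ·)).map Fin.val)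

/-- The number of (nontrivial) gaps between the direct paths of `σ` and `σ'`:
the number of nonzero entries of the gap vector. -/
def numGaps (n : ℕ) (σ σ' : Equiv.Perm (Fin n)) : ℕ :=
  ((gapVector n σ σ').filter (· != 0)).length

/-- The probability that the direct paths of `σ` and `σ'` are both accessible. -/
noncomputable def pairProb (n : ℕ) (σ σ' : Equiv.Perm (Fin n)) : ℝ :=
  (cubeMeasure n {ω | Accessible n σ ω ∧ Accessible n σ' ω}).toReal

/-- `c n s g`: the sum, over all ordered pairs of direct paths sharing exactly `s`
edges with `g` gaps, of the probability that both paths are accessible. -/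
noncomputable def c (n s g : ℕ) : ℝ :=
  ∑ p ∈ Finset.univ.filter
      (fun p : Equiv.Perm (Fin n) × Equiv.Perm (Fin n) =>
        (sharedSteps n p.1 p.2).card = s ∧ numGaps n p.1 p.2 = g),
    pairProb n p.1 p.2

/-- `w m`: the number of direct paths from `∅` to `[m]` in the `m`-dimensional hypercube
that are edge-disjoint from the canonical path (the identity permutation). -/
noncomputable def w (m : ℕ) : ℕ :=
  Nat.card {σ : Equiv.Perm (Fin m) // sharedSteps m σ 1 = ∅}

end RandomHypercube

/-!
Conditioning on the largest weight shows that a finite family of `N` independent uniform weights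
respects a partial order on its indices with probability (number of linear extensions) / `N!`.
Here the `2n - s` edges of the two paths carry the union of two chains. A shared edge lies at the
same level in both paths, hence is comparable to every other edge, so the linear extensions below
and above it multiply. Between consecutive shared edges there are two disjoint chains of length
`a_i` with no relation across them, and these can be shuffled in `C(2 a_i, a_i)` ways.
-/

namespace RandomHypercube

section LinearExtensions

variable {ι : Type*} {r : ι → ι → Prop} {S T U : Finset ι} {a c : ι}

open scoped Classical in
/-- The elements of `S` that are `r`-below no element of `S`. -/
noncomputable def maximalElements (r : ι → ι → Prop) (S : Finset ι) : Finset ι :=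
  {a ∈ S | ∀ b ∈ S, ¬ r a b}

lemma mem_maximalElements : a ∈ maximalElements r S ↔ a ∈ S ∧ ∀ b ∈ S, ¬ r a b := by
  classical exact Finset.mem_filter

lemma maximalElements_subset : maximalElements r S ⊆ S :=
  fun _ ha => (mem_maximalElements.1 ha).1

variable [DecidableEq ι]

/-- The number of linear extensions of `r` on `S`, that is, of enumerations of `S` in which `a`
comes before `b` whenever `r a b`. It is computed by choosing the last element, which has to be
maximal, and enumerating the others; for a cyclic `r` it is zero. -/
noncomputable def linExtCount (r : ι → ι → Prop) (S : Finset ι) : ℕ :=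
  if S = ∅ then 1 else ∑ m ∈ (maximalElements r S).attach, linExtCount r (S.erase m)
termination_by S.card
decreasing_by exact Finset.card_erase_lt_of_mem (maximalElements_subset m.2)

@[simp]
lemma linExtCount_empty : linExtCount r ∅ = 1 := by
  rw [linExtCount, if_pos rfl]

lemma linExtCount_eq_sum (hS : S.Nonempty) :
    linExtCount r S = ∑ m ∈ maximalElements r S, linExtCount r (S.erase m) := by
  rw [linExtCount, if_neg hS.ne_empty,
    Finset.sum_attach (maximalElements r S) fun m => linExtCount r (S.erase m)]

section Series

variable {α : Type*} {ρ : ι → α}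

lemma linExtCount_insert_of_forall_rel [Preorder α] (hρ : ∀ a b, r a b → ρ a < ρ b)
    (hT : ∀ a ∈ T, r a c) : linExtCount r (insert c T) = linExtCount r T := by
  have hmax : maximalElements r (insert c T) = {c} := by
    ext m
    simp only [mem_maximalElements, Finset.mem_insert, forall_eq_or_imp, Finset.mem_singleton]
    constructor
    · rintro ⟨rfl | hm, hmc, -⟩
      exacts [rfl, absurd (hT m hm) hmc]
    · rintro rfl
      exact ⟨.inl rfl, fun h => (hρ _ _ h).false,
        fun b hb h => (hρ _ _ h).asymm (hρ _ _ (hT b hb))⟩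
  have hcT : c ∉ T := fun h => (hρ _ _ (hT c h)).false
  rw [linExtCount_eq_sum (Finset.insert_nonempty c T), hmax, Finset.sum_singleton,
    Finset.erase_insert hcT]

lemma maximalElements_union_insert [Preorder α] (hρ : ∀ a b, r a b → ρ a < ρ b)
    (hT : ∀ a ∈ T, r a c) (hU : ∀ b ∈ U, r c b) (hne : U.Nonempty) :
    maximalElements r (T ∪ insert c U) = maximalElements r U := by
  ext m
  simp only [mem_maximalElements, Finset.mem_union, Finset.mem_insert]
  constructor
  · rintro ⟨hm | rfl | hm, hmax⟩
    · exact absurd (hT m hm) (hmax c (.inr (.inl rfl)))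
    · obtain ⟨u, hu⟩ := hne
      exact absurd (hU u hu) (hmax u (.inr (.inr hu)))
    · exact ⟨hm, fun b hb => hmax b (.inr (.inr hb))⟩
  · rintro ⟨hm, hmax⟩
    have hcm : ρ c < ρ m := hρ _ _ (hU m hm)
    refine ⟨.inr (.inr hm), ?_⟩
    rintro b (hb | rfl | hb) h
    · exact ((hρ _ _ h).trans (hρ _ _ (hT b hb))).asymm hcm
    · exact (hρ _ _ h).asymm hcm
    · exact hmax b hb h

theorem linExtCount_union_insert [Preorder α] (hρ : ∀ a b, r a b → ρ a < ρ b)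
    (hT : ∀ a ∈ T, r a c) (hU : ∀ b ∈ U, r c b) :
    linExtCount r (T ∪ insert c U) = linExtCount r T * linExtCount r U := by
  induction U using Finset.strongInduction with | H U ih
  obtain rfl | hne := U.eq_empty_or_nonempty
  · simpa [Finset.union_comm T] using linExtCount_insert_of_forall_rel hρ hT
  rw [linExtCount_eq_sum (hne.mono fun _ hx => by simp [hx]),
    maximalElements_union_insert hρ hT hU hne, linExtCount_eq_sum hne, Finset.mul_sum]
  refine Finset.sum_congr rfl fun m hm => ?_
  have hmU : m ∈ U := maximalElements_subset hm
  have hcm : ρ c < ρ m := hρ _ _ (hU m hmU)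
  have hmc : m ≠ c := by rintro rfl; exact hcm.false
  have hmT : m ∉ T := fun h => (hρ _ _ (hT m h)).asymm hcm
  rw [Finset.erase_union_distrib, Finset.erase_eq_of_notMem hmT,
    Finset.erase_insert_of_ne hmc.symm]
  exact ih _ (Finset.erase_ssubset hmU) fun b hb => hU b (Finset.mem_of_mem_erase hb)

theorem linExtCount_of_isChain [LinearOrder α] (hρ : ∀ a b, r a b → ρ a < ρ b)
    (hS : IsChain r (S : Set ι)) : linExtCount r S = 1 := by
  induction S using Finset.induction_on_max_value ρ with
  | empty => exact linExtCount_empty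
  | insert c T hcT hmax ih =>
    rw [Finset.coe_insert] at hS
    rw [linExtCount_insert_of_forall_rel hρ, ih (hS.mono (Set.subset_insert _ _))]
    intro a ha
    have hac : a ≠ c := by rintro rfl; exact hcT ha
    exact (hS (.inr ha) (.inl rfl) hac).resolve_right fun h => (hρ _ _ h).not_ge (hmax a ha)

end Series

section Parallel

lemma maximalElements_union (hTU : ∀ a ∈ T, ∀ b ∈ U, ¬ r a b ∧ ¬ r b a) :
    maximalElements r (T ∪ U) = maximalElements r T ∪ maximalElements r U := by
  ext m
  simp only [mem_maximalElements, Finset.mem_union]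
  constructor
  · rintro ⟨hm | hm, hmax⟩
    · exact .inl ⟨hm, fun b hb => hmax b (.inl hb)⟩
    · exact .inr ⟨hm, fun b hb => hmax b (.inr hb)⟩
  · rintro (⟨hm, hmax⟩ | ⟨hm, hmax⟩)
    · exact ⟨.inl hm, fun b hb => hb.elim (hmax b) fun h => (hTU m hm b h).1⟩
    · exact ⟨.inr hm, fun b hb => hb.elim (fun h => (hTU b h m hm).2) (hmax b)⟩

lemma linExtCount_union_eq_add (hne : (T ∪ U).Nonempty) (hdisj : Disjoint T U)
    (hTU : ∀ a ∈ T, ∀ b ∈ U, ¬ r a b ∧ ¬ r b a) :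
    linExtCount r (T ∪ U) = ∑ m ∈ maximalElements r T, linExtCount r (T.erase m ∪ U) +
      ∑ m ∈ maximalElements r U, linExtCount r (T ∪ U.erase m) := by
  rw [linExtCount_eq_sum hne, maximalElements_union hTU, Finset.sum_union
    (hdisj.mono maximalElements_subset maximalElements_subset)]
  congr 1 <;> refine Finset.sum_congr rfl fun m hm => ?_
  · rw [Finset.erase_union_distrib, Finset.erase_eq_of_notMem (s := U)
      (Finset.disjoint_left.1 hdisj (maximalElements_subset hm))]
  · rw [Finset.erase_union_distrib, Finset.erase_eq_of_notMem (s := T)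
      (Finset.disjoint_right.1 hdisj (maximalElements_subset hm))]

theorem linExtCount_union (hdisj : Disjoint T U) (hTU : ∀ a ∈ T, ∀ b ∈ U, ¬ r a b ∧ ¬ r b a) :
    linExtCount r (T ∪ U) =
      (T.card + U.card).choose T.card * (linExtCount r T * linExtCount r U) := by
  induction hk : T.card + U.card generalizing T U with
  | zero =>
    obtain ⟨rfl, rfl⟩ : T = ∅ ∧ U = ∅ := by simpa using hk
    simp
  | succ k ih =>
    obtain rfl | hT := T.eq_empty_or_nonempty
    · simp
    obtain rfl | hU := U.eq_empty_or_nonempty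
    · simp only [Finset.card_empty, add_zero] at hk
      simp [hk]
    have hT' : ∀ m ∈ maximalElements r T, linExtCount r (T.erase m ∪ U) =
        k.choose (T.card - 1) * (linExtCount r (T.erase m) * linExtCount r U) := by
      intro m hm
      have hcard := Finset.card_erase_add_one (maximalElements_subset hm)
      rw [ih (hdisj.mono_left (Finset.erase_subset _ _))
        (fun a ha => hTU a (Finset.mem_of_mem_erase ha)) (by omega), ← hcard, Nat.add_sub_cancel]
    have hU' : ∀ m ∈ maximalElements r U, linExtCount r (T ∪ U.erase m) =
        k.choose T.card * (linExtCount r T * linExtCount r (U.erase m)) := by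
      intro m hm
      have hcard := Finset.card_erase_add_one (maximalElements_subset hm)
      exact ih (hdisj.mono_right (Finset.erase_subset _ _))
        (fun a ha b hb => hTU a ha b (Finset.mem_of_mem_erase hb)) (by omega)
    have hpascal : (k + 1).choose T.card = k.choose (T.card - 1) + k.choose T.card := by
      obtain ⟨i, hi⟩ := Nat.exists_eq_succ_of_ne_zero hT.card_ne_zero
      rw [hi, Nat.choose_succ_succ, Nat.succ_sub_one]
    rw [linExtCount_union_eq_add (hT.mono Finset.subset_union_left) hdisj hTU,
      Finset.sum_congr rfl hT', Finset.sum_congr rfl hU', hpascal, linExtCount_eq_sum hT,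
      linExtCount_eq_sum hU, ← Finset.mul_sum, ← Finset.mul_sum, ← Finset.sum_mul,
      ← Finset.mul_sum, add_mul]

end Parallel

end LinearExtensions

section ProductMeasure

variable {ι : Type*} [Fintype ι] [DecidableEq ι] {α : ι → Type*} [∀ i, MeasurableSpace (α i)]
  (μ : ∀ i, Measure (α i)) [∀ i, SigmaFinite (μ i)]

lemma measurePreserving_update (i : ι) [IsProbabilityMeasure (μ i)] :
    MeasurePreserving (fun z : (∀ j, α j) × α i => Function.update z.1 i z.2)
      ((Measure.pi μ).prod (μ i)) (Measure.pi μ) := by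
  refine ⟨measurable_update', (Measure.pi_eq fun s hs => ?_).symm⟩
  have hpre : (fun z : (∀ j, α j) × α i => Function.update z.1 i z.2) ⁻¹' Set.univ.pi s =
      Set.univ.pi (Function.update s i Set.univ) ×ˢ s i := by
    ext z
    simp [Set.mem_pi, Function.forall_update_iff s fun j t => z.1 j ∈ t,
      Function.forall_update_iff z.1 fun j x => x ∈ s j, and_comm]
  rw [Measure.map_apply measurable_update' (.univ_pi hs), hpre, Measure.prod_prod, Measure.pi_pi,
    ← Finset.prod_erase_mul _ (fun j => μ j (s j)) (Finset.mem_univ i)]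
  congr 1
  rw [← Finset.prod_erase _ (a := i) (by simp)]
  exact Finset.prod_congr rfl fun j hj => by rw [Function.update_of_ne (Finset.ne_of_mem_erase hj)]

lemma pi_apply_eq_lintegral_update (i : ι) [IsProbabilityMeasure (μ i)] {s : Set (∀ j, α j)}
    (hs : MeasurableSet s) :
    Measure.pi μ s = ∫⁻ x, Measure.pi μ {ω | Function.update ω i x ∈ s} ∂μ i := by
  have hupd := measurePreserving_update μ i
  rw [← hupd.measure_preimage hs.nullMeasurableSet, Measure.prod_apply_symm (hupd.measurable hs)]
  rfl

end ProductMeasure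

lemma ae_injective_pi {ι β : Type*} [Fintype ι] [MeasurableSpace β] [MeasurableEq β]
    (ν : Measure β) [IsProbabilityMeasure ν] [NullSingletonClass ν] :
    ∀ᵐ ω ∂Measure.pi fun _ : ι => ν, Function.Injective ω := by
  classical
  have hne : ∀ a b : ι, a ≠ b → ∀ᵐ ω ∂Measure.pi fun _ : ι => ν, ω a ≠ ω b := by
    intro a b hab
    have hmeas : MeasurableSet {ω : ι → β | ω a = ω b} :=
      measurableSet_eq_fun (measurable_pi_apply a) (measurable_pi_apply b)
    have hnull : ∀ x, Measure.pi (fun _ : ι => ν) {ω | x = ω b} = 0 := fun x => by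
      simpa only [eq_comm] using Measure.pi_hyperplane (fun _ : ι => ν) b x
    simp [ae_iff, pi_apply_eq_lintegral_update _ a hmeas, hab.symm, hnull]
  filter_upwards [ae_all_iff.2 fun a => ae_all_iff.2 fun b => ae_all_iff.2 (hne a b)] with ω hω
  exact fun a b h => by_contra fun hab => hω a b hab h

section UniformWeights

/-- The uniform distribution on `[0, 1]`, as a measure on the line. -/
noncomputable abbrev unitUniform : Measure ℝ := volume.restrict (Set.Icc 0 1)

instance : IsProbabilityMeasure unitUniform := ⟨by simp⟩

/-- The law of a family of independent uniform weights on `[0, 1]`. -/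
noncomputable abbrev uniformWeights (ι : Type*) [Fintype ι] : Measure (ι → ℝ) :=
  Measure.pi fun _ => unitUniform

variable {ι : Type*} {r : ι → ι → Prop} {S T : Finset ι} {m : ι} {t : ℝ}

/-- The weightings that are below `t` on `S` and strictly increasing there with respect to `r`. -/
def increasingBelow (r : ι → ι → Prop) (S : Finset ι) (t : ℝ) : Set (ι → ℝ) :=
  {ω | (∀ a ∈ S, ω a < t) ∧ ∀ a ∈ S, ∀ b ∈ S, r a b → ω a < ω b}

/-- The weightings that are increasing on `T` with all weights there below that of `m`, itself
below `t`. For `m ∉ T` this is the part of `increasingBelow r (insert m T) t` where `m` carries the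
largest weight. -/
def increasingBelowTop (r : ι → ι → Prop) (T : Finset ι) (m : ι) (t : ℝ) : Set (ι → ℝ) :=
  {ω | ω m < t ∧ ω ∈ increasingBelow r T (ω m)}

lemma measurableSet_increasingBelowTop [Countable ι] :
    MeasurableSet (increasingBelowTop r T m t) := by
  simp only [increasingBelowTop, increasingBelow, Set.ofPred_and, Set.ofPred_forall]
  measurability

lemma increasingBelowTop_subset [DecidableEq ι] (hm : m ∈ maximalElements r S) :
    increasingBelowTop r (S.erase m) m t ⊆ increasingBelow r S t := by
  rintro ω ⟨hmt, hlt, hinc⟩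
  obtain ⟨-, hmax⟩ := mem_maximalElements.1 hm
  have hle : ∀ a ∈ S, a ≠ m → ω a < ω m := fun a ha ham => hlt a (Finset.mem_erase.2 ⟨ham, ha⟩)
  refine ⟨fun a ha => ?_, fun a ha b hb hab => ?_⟩
  · obtain rfl | ham := eq_or_ne a m
    exacts [hmt, (hle a ha ham).trans hmt]
  · have ham : a ≠ m := by rintro rfl; exact hmax b hb hab
    obtain rfl | hbm := eq_or_ne b m
    · exact hle a ha ham
    · exact hinc a (Finset.mem_erase.2 ⟨ham, ha⟩) b (Finset.mem_erase.2 ⟨hbm, hb⟩) hab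

lemma exists_mem_increasingBelowTop [DecidableEq ι] {ω : ι → ℝ} (hS : S.Nonempty)
    (hω : Function.Injective ω) (h : ω ∈ increasingBelow r S t) :
    ∃ m ∈ maximalElements r S, ω ∈ increasingBelowTop r (S.erase m) m t := by
  obtain ⟨m, hm, hmax⟩ := S.exists_max_image ω hS
  refine ⟨m, mem_maximalElements.2 ⟨hm, fun b hb hmb => ?_⟩, h.1 m hm, fun a ha => ?_,
    fun a ha b hb => h.2 a (Finset.mem_of_mem_erase ha) b (Finset.mem_of_mem_erase hb)⟩
  · exact (h.2 m hm b hb hmb).not_ge (hmax b hb)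
  · exact (hmax a (Finset.mem_of_mem_erase ha)).lt_of_ne (hω.ne (Finset.ne_of_mem_erase ha))

lemma pairwiseDisjoint_increasingBelowTop [DecidableEq ι] :
    (S : Set ι).PairwiseDisjoint fun m => increasingBelowTop r (S.erase m) m t := by
  intro a ha b hb hab
  refine Set.disjoint_left.2 fun ω hωa hωb => ?_
  exact (hωa.2.1 b (Finset.mem_erase.2 ⟨hab.symm, hb⟩)).asymm
    (hωb.2.1 a (Finset.mem_erase.2 ⟨hab, ha⟩))

lemma setOf_update_mem_increasingBelowTop [DecidableEq ι] (hm : m ∉ T) (x : ℝ) :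
    {ω | Function.update ω m x ∈ increasingBelowTop r T m t} =
      {ω | x < t ∧ ω ∈ increasingBelow r T x} := by
  ext ω
  have hupd : ∀ a ∈ T, Function.update ω m x a = ω a := fun a ha =>
    Function.update_of_ne (by rintro rfl; exact hm ha) _ _
  simp +contextual [increasingBelowTop, increasingBelow, hupd]

lemma lintegral_Ico_mul_pow_div_factorial (a : ℝ) (ha : 0 ≤ a) (N : ℕ) (ht : 0 ≤ t) :
    ∫⁻ x in Set.Ico 0 t, ENNReal.ofReal (a * x ^ N / N.factorial) =
      ENNReal.ofReal (a * t ^ (N + 1) / (N + 1).factorial) := by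
  have hintegrable : IntervalIntegrable (fun x : ℝ => a * x ^ N / N.factorial) volume 0 t :=
    Continuous.intervalIntegrable (by fun_prop) _ _
  have hnonneg : ∀ᵐ x ∂volume.restrict (Set.Ioc 0 t), 0 ≤ a * x ^ N / N.factorial := by
    filter_upwards [ae_restrict_mem measurableSet_Ioc] with x hx
    have := hx.1.le
    positivity
  rw [restrict_Ico_eq_restrict_Ioc, ← ofReal_integral_eq_lintegral_ofReal
    ((intervalIntegrable_iff_integrableOn_Ioc_of_le ht).1 hintegrable) hnonneg,
    ← intervalIntegral.integral_of_le ht]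
  congr 1
  rw [intervalIntegral.integral_div, intervalIntegral.integral_const_mul, integral_pow,
    Nat.factorial_succ]
  push_cast
  field_simp
  simp

variable [Fintype ι]

lemma ae_forall_lt_one : ∀ᵐ ω ∂uniformWeights ι, ∀ a, ω a < 1 := by
  have hlt : ∀ᵐ x ∂unitUniform, x < 1 := by
    filter_upwards [ae_restrict_mem measurableSet_Icc, Measure.ae_ne _ 1] with x hx hx1
    exact hx.2.lt_of_ne hx1
  exact ae_all_iff.2 fun a =>
    (Measure.tendsto_eval_ae_ae (μ := fun _ : ι => unitUniform) (i := a)).eventually hlt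

lemma measure_increasingBelowTop (hm : m ∉ T) (ht : t ≤ 1) :
    uniformWeights ι (increasingBelowTop r T m t) =
      ∫⁻ x in Set.Ico 0 t, uniformWeights ι (increasingBelow r T x) := by
  classical
  have hIco : Set.Iio t ∩ Set.Icc 0 1 = Set.Ico 0 t := by
    ext x
    exact ⟨fun h => ⟨h.2.1, h.1⟩, fun h => ⟨h.2, h.1, h.2.le.trans ht⟩⟩
  rw [pi_apply_eq_lintegral_update _ m measurableSet_increasingBelowTop, ← hIco,
    ← Measure.restrict_restrict measurableSet_Iio, ← lintegral_indicator measurableSet_Iio]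
  refine lintegral_congr fun x => ?_
  rw [setOf_update_mem_increasingBelowTop hm]
  by_cases hx : x < t <;> simp [hx]

lemma measure_increasingBelow_eq_sum [DecidableEq ι] (hS : S.Nonempty) :
    uniformWeights ι (increasingBelow r S t) =
      ∑ m ∈ maximalElements r S,
        uniformWeights ι (increasingBelowTop r (S.erase m) m t) := by
  have hunion : increasingBelow r S t =ᵐ[uniformWeights ι]
      (⋃ m ∈ maximalElements r S, increasingBelowTop r (S.erase m) m t : Set (ι → ℝ)) := by
    refine eventuallyEq_set.2 ?_
    filter_upwards [ae_injective_pi unitUniform] with ω hω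
    simp only [Set.mem_iUnion, exists_prop]
    exact ⟨exists_mem_increasingBelowTop hS hω, fun ⟨m, hm, h⟩ => increasingBelowTop_subset hm h⟩
  rw [measure_congr hunion, measure_biUnion_finset
    (pairwiseDisjoint_increasingBelowTop.subset (by exact_mod_cast maximalElements_subset))
    fun _ _ => measurableSet_increasingBelowTop]

theorem measure_increasingBelow [DecidableEq ι] (ht₀ : 0 ≤ t) (ht₁ : t ≤ 1) :
    uniformWeights ι (increasingBelow r S t) =
      ENNReal.ofReal (linExtCount r S * t ^ S.card / S.card.factorial) := by
  induction hN : S.card generalizing S t with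
  | zero =>
    obtain rfl := Finset.card_eq_zero.1 hN
    simp [increasingBelow]
  | succ N ih =>
    have hS : S.Nonempty := Finset.card_pos.1 (by omega)
    have htop : ∀ m ∈ maximalElements r S,
        uniformWeights ι (increasingBelowTop r (S.erase m) m t) =
          ENNReal.ofReal (linExtCount r (S.erase m) * t ^ (N + 1) / (N + 1).factorial) := by
      intro m hm
      have hcard : (S.erase m).card = N := by
        rw [Finset.card_erase_of_mem (maximalElements_subset hm), hN, Nat.add_sub_cancel]
      rw [measure_increasingBelowTop (Finset.notMem_erase m S) ht₁,
        ← lintegral_Ico_mul_pow_div_factorial _ (Nat.cast_nonneg _) N ht₀]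
      exact setLIntegral_congr_fun measurableSet_Ico fun x hx =>
        ih hx.1 (hx.2.le.trans ht₁) hcard
    rw [measure_increasingBelow_eq_sum hS, Finset.sum_congr rfl htop,
      ← ENNReal.ofReal_sum_of_nonneg fun _ _ => by positivity, linExtCount_eq_sum hS,
      ← Finset.sum_div, ← Finset.sum_mul, Nat.cast_sum]

end UniformWeights

section Paths

variable {n : ℕ} {σ τ : Equiv.Perm (Fin n)} {a b : EdgeIdx n} {p q : ℕ}

lemma card_initSeg (σ : Equiv.Perm (Fin n)) (j : Fin n) : (initSeg n σ j).card = j := by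
  rw [initSeg, Finset.card_image_of_injective _ σ.injective, Finset.filter_gt_eq_Iio, Fin.card_Iio]

lemma eq_of_pathEdge_eq {i j : Fin n} (h : pathEdge n σ i = pathEdge n τ j) : i = j := by
  have hcard := congrArg (fun e : EdgeIdx n => e.1.card) h
  simp only [pathEdge, card_initSeg] at hcard
  exact Fin.ext hcard

lemma pathEdge_injective (σ : Equiv.Perm (Fin n)) : Function.Injective (pathEdge n σ) :=
  fun _ _ => eq_of_pathEdge_eq

lemma mem_sharedSteps {j : Fin n} :
    j ∈ sharedSteps n σ τ ↔ pathEdge n σ j = pathEdge n τ j := by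
  simp [sharedSteps]

/-- The order in which the direct path of `σ` visits its edges. -/
def Precedes (σ : Equiv.Perm (Fin n)) (a b : EdgeIdx n) : Prop :=
  ∃ i j, i < j ∧ pathEdge n σ i = a ∧ pathEdge n σ j = b

/-- `a` is visited before `b` by one of the direct paths of `σ` and `τ`. This relation is not
transitive: an edge of `σ` and a later edge of `τ` need not be related even if a shared edge lies
between them. -/
def PairPrecedes (σ τ : Equiv.Perm (Fin n)) (a b : EdgeIdx n) : Prop :=
  Precedes σ a b ∨ Precedes τ a b

lemma Precedes.card_lt_card (h : Precedes σ a b) : a.1.card < b.1.card := by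
  obtain ⟨i, j, hij, rfl, rfl⟩ := h
  simpa only [pathEdge, card_initSeg, Fin.val_fin_lt] using hij

lemma PairPrecedes.card_lt_card (h : PairPrecedes σ τ a b) : a.1.card < b.1.card :=
  h.elim Precedes.card_lt_card Precedes.card_lt_card

lemma accessible_iff_forall_precedes {ω : CubeOmega n} :
    Accessible n σ ω ↔ ∀ a b, Precedes σ a b → ω a < ω b :=
  ⟨by rintro h _ _ ⟨i, j, hij, rfl, rfl⟩; exact h hij, fun h i j hij => h _ _ ⟨i, j, hij, rfl, rfl⟩⟩

/-- The edges used by the direct path of `σ` in the steps `p, …, q - 1`. -/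
def segment (σ : Equiv.Perm (Fin n)) (p q : ℕ) : Finset (EdgeIdx n) :=
  ({j : Fin n | p ≤ j ∧ j < q} : Finset (Fin n)).image (pathEdge n σ)

lemma mem_segment : a ∈ segment σ p q ↔ ∃ j : Fin n, (p ≤ j ∧ j < q) ∧ pathEdge n σ j = a := by
  simp [segment]

lemma card_segment (hq : q ≤ n) : (segment σ p q).card = q - p := by
  have hIco : ({j : Fin n | p ≤ j ∧ j < q} : Finset (Fin n)).map Fin.valEmbedding =
      Finset.Ico p q := by
    ext k
    simp only [Finset.mem_map, Finset.mem_filter_univ, Fin.valEmbedding_apply, Finset.mem_Ico]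
    exact ⟨by rintro ⟨j, hj, rfl⟩; exact hj, fun hk => ⟨⟨k, hk.2.trans_le hq⟩, hk, rfl⟩⟩
  rw [segment, Finset.card_image_of_injective _ (pathEdge_injective σ),
    ← Finset.card_map Fin.valEmbedding, hIco, Nat.card_Ico]

lemma isChain_segment : IsChain (Precedes σ) (segment σ p q : Set (EdgeIdx n)) := by
  intro a ha b hb hab
  obtain ⟨i, -, rfl⟩ := mem_segment.1 ha
  obtain ⟨j, -, rfl⟩ := mem_segment.1 hb
  exact (ne_of_apply_ne _ hab).lt_or_gt.imp (fun h => ⟨i, j, h, rfl, rfl⟩)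
    fun h => ⟨j, i, h, rfl, rfl⟩

/-- The edges used by the direct paths of `σ` and `τ` in the steps `p, …, q - 1`. -/
def pairSegment (σ τ : Equiv.Perm (Fin n)) (p q : ℕ) : Finset (EdgeIdx n) :=
  segment σ p q ∪ segment τ p q

lemma linExtCount_pairSegment_of_forall_notMem (hq : q ≤ n)
    (hpq : ∀ j : Fin n, p ≤ j → j < q → j ∉ sharedSteps n σ τ) :
    linExtCount (PairPrecedes σ τ) (pairSegment σ τ p q) = (2 * (q - p)).choose (q - p) := by
  have hne : ∀ i j : Fin n, p ≤ i → i < q → pathEdge n σ i ≠ pathEdge n τ j := by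
    intro i j hpi hiq h
    obtain rfl := eq_of_pathEdge_eq h
    exact hpq i hpi hiq (mem_sharedSteps.2 h)
  have hdisj : Disjoint (segment σ p q) (segment τ p q) := by
    rw [Finset.disjoint_left]
    intro a ha hb
    obtain ⟨i, ⟨hpi, hiq⟩, rfl⟩ := mem_segment.1 ha
    obtain ⟨j, -, hj⟩ := mem_segment.1 hb
    exact hne i j hpi hiq hj.symm
  have hincomp : ∀ a ∈ segment σ p q, ∀ b ∈ segment τ p q,
      ¬ PairPrecedes σ τ a b ∧ ¬ PairPrecedes σ τ b a := by
    intro a ha b hb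
    obtain ⟨i, ⟨hpi, hiq⟩, rfl⟩ := mem_segment.1 ha
    obtain ⟨j, ⟨hpj, hjq⟩, rfl⟩ := mem_segment.1 hb
    have hj : ∀ k, pathEdge n σ k ≠ pathEdge n τ j := fun k hk => by
      obtain rfl := eq_of_pathEdge_eq hk
      exact hne k k hpj hjq hk
    have hi : ∀ k, pathEdge n τ k ≠ pathEdge n σ i := fun k => (hne i k hpi hiq).symm
    constructor
    · rintro (⟨-, k, -, -, hk⟩ | ⟨k, -, -, hk, -⟩)
      exacts [hj k hk, hi k hk]
    · rintro (⟨k, -, -, hk, -⟩ | ⟨-, k, -, -, hk⟩)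
      exacts [hj k hk, hi k hk]
  have hσ : linExtCount (PairPrecedes σ τ) (segment σ p q) = 1 :=
    linExtCount_of_isChain (fun _ _ => PairPrecedes.card_lt_card)
      (isChain_segment.mono_rel fun _ _ => .inl)
  have hτ : linExtCount (PairPrecedes σ τ) (segment τ p q) = 1 :=
    linExtCount_of_isChain (fun _ _ => PairPrecedes.card_lt_card)
      (isChain_segment.mono_rel fun _ _ => .inr)
  rw [pairSegment, linExtCount_union hdisj hincomp, hσ, hτ, card_segment hq, card_segment hq,
    two_mul, mul_one, mul_one]

lemma segment_eq_union_insert {x : Fin n} (hx : p ≤ x) (hxq : x < q) :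
    segment σ p q = segment σ p x ∪ insert (pathEdge n σ x) (segment σ (x + 1) q) := by
  ext a
  simp only [Finset.mem_union, Finset.mem_insert, mem_segment]
  constructor
  · rintro ⟨j, ⟨hpj, hjq⟩, rfl⟩
    rcases lt_trichotomy j x with h | rfl | h
    exacts [.inl ⟨j, ⟨hpj, h⟩, rfl⟩, .inr (.inl rfl), .inr (.inr ⟨j, ⟨h, hjq⟩, rfl⟩)]
  · rintro (⟨j, hj, rfl⟩ | rfl | ⟨j, hj, rfl⟩)
    exacts [⟨j, by omega, rfl⟩, ⟨x, ⟨hx, hxq⟩, rfl⟩, ⟨j, by omega, rfl⟩]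

lemma linExtCount_pairSegment_of_mem {x : Fin n} (hx : x ∈ sharedSteps n σ τ) (hpx : p ≤ x)
    (hxq : x < q) :
    linExtCount (PairPrecedes σ τ) (pairSegment σ τ p q) =
      linExtCount (PairPrecedes σ τ) (pairSegment σ τ p x) *
        linExtCount (PairPrecedes σ τ) (pairSegment σ τ (x + 1) q) := by
  have hxeq := mem_sharedSteps.1 hx
  have hsplit : pairSegment σ τ p q =
      pairSegment σ τ p x ∪ insert (pathEdge n σ x) (pairSegment σ τ (x + 1) q) := by
    rw [pairSegment, segment_eq_union_insert hpx hxq, segment_eq_union_insert hpx hxq, ← hxeq,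
      Finset.union_union_union_comm, ← Finset.insert_union_distrib, pairSegment, pairSegment]
  rw [hsplit]
  refine linExtCount_union_insert (fun _ _ => PairPrecedes.card_lt_card) (fun a ha => ?_)
    fun b hb => ?_
  · obtain ha | ha := Finset.mem_union.1 ha <;> obtain ⟨j, hj, rfl⟩ := mem_segment.1 ha
    exacts [.inl ⟨j, x, hj.2, rfl, rfl⟩, .inr ⟨j, x, hj.2, rfl, hxeq.symm⟩]
  · obtain hb | hb := Finset.mem_union.1 hb <;> obtain ⟨j, hj, rfl⟩ := mem_segment.1 hb
    exacts [.inl ⟨x, j, hj.1, rfl, rfl⟩, .inr ⟨x, j, hj.1, hxeq.symm, rfl⟩]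

/-- The part of the gap vector above level `p`, for the list `l` of the levels of the shared edges
from `p` on; `gapsOfList n l` is the case `p = 0`. -/
def gapsFrom (n p : ℕ) (l : List ℕ) : List ℕ :=
  List.zipWith (fun a b => b - a) (p :: l.map (· + 1)) (l ++ [n])

lemma gapsFrom_cons (n p x : ℕ) (l : List ℕ) :
    gapsFrom n p (x :: l) = (x - p) :: gapsFrom n (x + 1) l :=
  rfl

lemma linExtCount_pairSegment (l : List (Fin n)) (hl : l.Pairwise (· < ·))
    (hmem : ∀ k, k ∈ l ↔ p ≤ k ∧ k ∈ sharedSteps n σ τ) :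
    linExtCount (PairPrecedes σ τ) (pairSegment σ τ p n) =
      ((gapsFrom n p (l.map Fin.val)).map fun a => (2 * a).choose a).prod := by
  induction l generalizing p with
  | nil =>
    have hp : ∀ j : Fin n, p ≤ j → j < n → j ∉ sharedSteps n σ τ := fun j hpj _ hj =>
      List.not_mem_nil ((hmem j).2 ⟨hpj, hj⟩)
    simpa [gapsFrom] using linExtCount_pairSegment_of_forall_notMem le_rfl hp
  | cons x l ih =>
    obtain ⟨hxl, hl⟩ := List.pairwise_cons.1 hl
    obtain ⟨hpx, hx⟩ := (hmem x).1 List.mem_cons_self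
    have hgap : ∀ j : Fin n, p ≤ j → (j : ℕ) < x → j ∉ sharedSteps n σ τ := by
      intro j hpj hjx hj
      obtain rfl | hjl := List.mem_cons.1 ((hmem j).2 ⟨hpj, hj⟩)
      exacts [hjx.false, (hxl j hjl).asymm hjx]
    have hmem' : ∀ k, k ∈ l ↔ (x : ℕ) + 1 ≤ k ∧ k ∈ sharedSteps n σ τ := by
      refine fun k => ⟨fun hk => ⟨hxl k hk, ((hmem k).1 (List.mem_cons_of_mem x hk)).2⟩, ?_⟩
      rintro ⟨hxk, hk⟩
      refine (List.mem_cons.1 ((hmem k).2 ⟨by omega, hk⟩)).resolve_left ?_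
      rintro rfl
      omega
    rw [linExtCount_pairSegment_of_mem hx hpx x.2, ih hl hmem',
      linExtCount_pairSegment_of_forall_notMem x.2.le hgap, List.map_cons, gapsFrom_cons,
      List.map_cons, List.prod_cons]

theorem linExtCount_pairPrecedes (σ τ : Equiv.Perm (Fin n)) :
    linExtCount (PairPrecedes σ τ) (pairSegment σ τ 0 n) =
      ((gapVector n σ τ).map fun a => (2 * a).choose a).prod :=
  linExtCount_pairSegment _ (sharedSteps n σ τ).sortedLT_sort.pairwise (by simp)

lemma card_pairSegment (σ τ : Equiv.Perm (Fin n)) :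
    (pairSegment σ τ 0 n).card = 2 * n - (sharedSteps n σ τ).card := by
  have hinter : segment σ 0 n ∩ segment τ 0 n = (sharedSteps n σ τ).image (pathEdge n σ) := by
    ext a
    simp only [Finset.mem_inter, mem_segment, Finset.mem_image, mem_sharedSteps]
    constructor
    · rintro ⟨⟨i, -, rfl⟩, j, -, hj⟩
      obtain rfl := eq_of_pathEdge_eq hj
      exact ⟨j, hj.symm, rfl⟩
    · rintro ⟨j, hj, rfl⟩
      exact ⟨⟨j, by omega, rfl⟩, j, by omega, hj.symm⟩
  rw [pairSegment, Finset.card_union, hinter, card_segment le_rfl, card_segment le_rfl,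
    Finset.card_image_of_injective _ (pathEdge_injective σ), Nat.sub_zero, two_mul]

lemma mem_increasingBelow_pairSegment {ω : CubeOmega n} (hω : ∀ a, ω a < 1) :
    ω ∈ increasingBelow (PairPrecedes σ τ) (pairSegment σ τ 0 n) 1 ↔
      Accessible n σ ω ∧ Accessible n τ ω := by
  have hσ : ∀ j, pathEdge n σ j ∈ pairSegment σ τ 0 n := fun j =>
    Finset.mem_union_left _ (mem_segment.2 ⟨j, by omega, rfl⟩)
  have hτ : ∀ j, pathEdge n τ j ∈ pairSegment σ τ 0 n := fun j =>
    Finset.mem_union_right _ (mem_segment.2 ⟨j, by omega, rfl⟩)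
  constructor
  · rintro ⟨-, h⟩
    exact ⟨fun i j hij => h _ (hσ i) _ (hσ j) (.inl ⟨i, j, hij, rfl, rfl⟩),
      fun i j hij => h _ (hτ i) _ (hτ j) (.inr ⟨i, j, hij, rfl, rfl⟩)⟩
  · rintro ⟨h₁, h₂⟩
    exact ⟨fun a _ => hω a, fun a _ b _ hab => hab.elim
      (accessible_iff_forall_precedes.1 h₁ a b) (accessible_iff_forall_precedes.1 h₂ a b)⟩

end Paths

end RandomHypercube

open RandomHypercube in
theorem prob_both_accessible_general (n : ℕ) (σ τ : Equiv.Perm (Fin n)) :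
    cubeMeasure n {ω | Accessible n σ ω ∧ Accessible n τ ω} =
      ((gapVector n σ τ).map fun a => ((2 * a).choose a : ℝ≥0∞)).prod /
        ((2 * n - (sharedSteps n σ τ).card).factorial : ℝ≥0∞) := by
  have hset : {ω | Accessible n σ ω ∧ Accessible n τ ω} =ᵐ[cubeMeasure n]
      increasingBelow (PairPrecedes σ τ) (pairSegment σ τ 0 n) 1 :=
    eventuallyEq_set.2 (ae_forall_lt_one.mono fun ω hω => (mem_increasingBelow_pairSegment hω).symm)
  calc cubeMeasure n {ω | Accessible n σ ω ∧ Accessible n τ ω}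
      = ENNReal.ofReal (linExtCount (PairPrecedes σ τ) (pairSegment σ τ 0 n) *
          1 ^ (pairSegment σ τ 0 n).card / (pairSegment σ τ 0 n).card.factorial) :=
        (measure_congr hset).trans (measure_increasingBelow zero_le_one le_rfl)
    _ = _ := by
        rw [linExtCount_pairPrecedes, card_pairSegment, one_pow, mul_one,
          ENNReal.ofReal_div_of_pos (by positivity), ENNReal.ofReal_natCast,
          ENNReal.ofReal_natCast, Nat.cast_list_prod, List.map_map, Function.comp_def]

open RandomHypercube in
/-- If the direct path of `σ` shares exactly `s` edges with the canonical path
(the identity permutation) and has gap vector `a = (a_0, …, a_s)` relative to it, then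
the probability that both paths are accessible is `(∏ i, C(2 a_i, a_i)) / (2n - s)!`. -/
theorem prob_both_accessible (n : ℕ) (hn : 1 ≤ n) (σ : Equiv.Perm (Fin n))
    (s : ℕ) (hs : s = (sharedSteps n σ 1).card)
    (a : List ℕ) (ha : a = gapVector n σ 1) :
    cubeMeasure n {ω | Accessible n σ ω ∧ Accessible n 1 ω}
      = ((a.map fun ai => ((2 * ai).choose ai : ℝ≥0∞)).prod)
        / ((2 * n - s).factorial : ℝ≥0∞) := by
  subst hs ha
  exact prob_both_accessible_general n σ 1
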